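/- For every natural number N, a(3N) = Σ_{l=0}^{2N} Σ_{(n1, n2) ∈ ℕ², 2n1 + n2 = 3l} b(N + l, n1, n2), where each inner sum is finite since 2n1 + n2 = 3l forces n1 ≤ ⌊3l/2⌋ and n2 ≤ 3l. -/

import Mathlib

open scoped BigOperators

/-!
Put `(m, n₁, n₂)` in degree `3 m - 2 n₁ - n₂`. The nine shifts in the recurrence for `b` have
degrees `1, …, 9`, exactly the lags in the recurrence for `a`, and the corresponding coefficients
agree and depend on the degree only. Hence the sums of `b` over the planes of constant degree
satisfy the recurrence for `a` with the same initial values, and so equal `a`. The sums are finite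
because `b` lives on the cone generated by the shifts, where the degree dominates all coordinates.
-/

open Function

/-- The family `b` on `G` satisfies the linear recurrence with shifts `s i`, leading coefficient
`d` and coefficients `c i`, all of them functions of the degree `φ g ∈ H`, at every `g` of nonzero
degree. Nothing is required in degree `0`, where initial values are prescribed. The recurrences for
`b` (with `G = ℤ × ℤ × ℤ`) and for `a` (with `G = H = ℤ`) are both of this form. -/
def GradedRecurrence {ι G H R : Type*} [Fintype ι] [AddCommGroup G] [AddCommGroup H]
    [NonUnitalNonAssocSemiring R] (φ : G →+ H) (s : ι → G) (d : H → R) (c : ι → H → R)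
    (b : G → R) : Prop :=
  ∀ g, φ g ≠ 0 → d (φ g) * b g = ∑ i, c i (φ g) * b (g - s i)

/-- The total of the family `b` over the elements of degree `h`; a junk value `0` if `b` has
infinite support there. -/
noncomputable def fiberSum {G H R : Type*} [AddCommGroup G] [AddCommGroup H] [AddCommMonoid R]
    (φ : G →+ H) (b : G → R) (h : H) : R :=
  ∑ᶠ g ∈ φ ⁻¹' {h}, b g

theorem finsum_mem_finset_sum_comm {α β M : Type*} [AddCommMonoid M] {s : Set α} (t : Finset β)
    (f : α → β → M) (hf : ∀ i ∈ t, (s ∩ support fun a => f a i).Finite) :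
    ∑ᶠ a ∈ s, ∑ i ∈ t, f a i = ∑ i ∈ t, ∑ᶠ a ∈ s, f a i := by
  simp_rw [← finsum_set_coe_eq_finsum_mem]
  exact finsum_sum_comm t (fun (a : s) i => f a i) fun i hi =>
    ((hf i hi).preimage Subtype.val_injective.injOn).subset fun a ha => ⟨a.2, ha⟩

section FiberSum

variable {G H R : Type*} [AddCommGroup G] [AddCommGroup H] [AddCommMonoid R]
  (φ : G →+ H) (b : G → R)

theorem bijOn_sub_right_fiber (s : G) (h : H) :
    Set.BijOn (· - s) (φ ⁻¹' {h}) (φ ⁻¹' {h - φ s}) := by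
  refine ⟨fun g hg => ?_, sub_left_injective.injOn,
    fun g hg => ⟨g + s, ?_, add_sub_cancel_right g s⟩⟩
  · simpa using hg
  · simpa [eq_sub_iff_add_eq] using hg

theorem fiberSum_comp_sub_right (s : G) (h : H) :
    fiberSum φ (fun g => b (g - s)) h = fiberSum φ b (h - φ s) :=
  finsum_mem_eq_of_bijOn _ (bijOn_sub_right_fiber φ s h) fun _ _ => rfl

theorem finite_fiber_inter_support_comp_sub_right (s : G) {h : H}
    (hfin : (φ ⁻¹' {h - φ s} ∩ support b).Finite) :
    (φ ⁻¹' {h} ∩ support fun g => b (g - s)).Finite :=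
  (hfin.preimage sub_left_injective.injOn).subset fun _ hg =>
    ⟨(bijOn_sub_right_fiber φ s h).mapsTo hg.1, hg.2⟩

variable {φ b}

theorem fiberSum_zero_eq_apply_zero (hb : ∀ g, φ g = 0 → g ≠ 0 → b g = 0) :
    fiberSum φ b 0 = b 0 := by
  rw [fiberSum, finsum_mem_inter_support_eq' b _ {0} fun g hg => ?_, finsum_mem_singleton]
  simp only [Set.mem_preimage, Set.mem_singleton_iff]
  exact ⟨fun h0 => not_imp_comm.1 (hb g h0) hg, fun h0 => by rw [h0, map_zero]⟩

theorem fiberSum_eq_zero {h : H} (hb : ∀ g, φ g = h → b g = 0) : fiberSum φ b h = 0 :=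
  finsum_mem_eq_zero_of_forall_eq_zero hb

end FiberSum

namespace GradedRecurrence

variable {ι G H R : Type*} [Fintype ι] [AddCommGroup G] [AddCommGroup H]
  {φ : G →+ H} {s : ι → G}

theorem of_nonneg [NonUnitalNonAssocSemiring R] [Preorder G] [IsOrderedAddMonoid G]
    {d : H → R} {c : ι → H → R} {b : G → R} (hs : ∀ i, 0 ≤ s i) (hb : ∀ g, ¬ 0 ≤ g → b g = 0)
    (hrec : ∀ g, 0 ≤ g → φ g ≠ 0 → d (φ g) * b g = ∑ i, c i (φ g) * b (g - s i)) :
    GradedRecurrence φ s d c b := by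
  intro g hg
  by_cases h0 : 0 ≤ g
  · exact hrec g h0 hg
  · have hshift (i : ι) : b (g - s i) = 0 :=
      hb _ fun h => h0 (h.trans (sub_le_self g (hs i)))
    simp [hb g h0, hshift]

protected theorem sub [NonUnitalNonAssocRing R] {d : H → R} {c : ι → H → R} {b b' : G → R}
    (hb : GradedRecurrence φ s d c b) (hb' : GradedRecurrence φ s d c b') :
    GradedRecurrence φ s d c (b - b') := by
  intro g hg
  simp only [Pi.sub_apply, mul_sub, Finset.sum_sub_distrib, hb g hg, hb' g hg]

protected theorem fiberSum [NonUnitalNonAssocSemiring R] {d : H → R} {c : ι → H → R} {b : G → R}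
    (hb : GradedRecurrence φ s d c b) (hfin : ∀ h, (φ ⁻¹' {h} ∩ support b).Finite) :
    GradedRecurrence (AddMonoidHom.id H) (φ ∘ s) d c (fiberSum φ b) := by
  intro h hh
  have hfin' (i : ι) := finite_fiber_inter_support_comp_sub_right φ b (s i) (hfin (h - φ (s i)))
  calc d h * ∑ᶠ g ∈ φ ⁻¹' {h}, b g
      = ∑ᶠ g ∈ φ ⁻¹' {h}, d h * b g :=
        (AddMonoidHom.mulLeft (d h)).map_finsum_mem' (hfin h)
    _ = ∑ᶠ g ∈ φ ⁻¹' {h}, ∑ i, c i h * b (g - s i) :=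
        finsum_mem_congr rfl fun g hg => by
          obtain rfl : φ g = h := hg
          exact hb g hh
    _ = ∑ i, ∑ᶠ g ∈ φ ⁻¹' {h}, c i h * b (g - s i) :=
        finsum_mem_finset_sum_comm _ _ fun i _ =>
          (hfin' i).subset (Set.inter_subset_inter_right _ (support_mul_subset_right _ _))
    _ = ∑ i, c i h * ∑ᶠ g ∈ φ ⁻¹' {h}, b (g - s i) :=
        Finset.sum_congr rfl fun i _ =>
          ((AddMonoidHom.mulLeft (c i h)).map_finsum_mem' (hfin' i)).symm
    _ = ∑ i, c i h * fiberSum φ b (h - φ (s i)) :=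
        Finset.sum_congr rfl fun i _ => congrArg _ (fiberSum_comp_sub_right φ b (s i) h)

/-- If `b g ≠ 0` in nonzero degree, then `b (g - s i) ≠ 0` for some `i`, at smaller height `ht`.
Descending, one reaches degree `0` before the height becomes negative. -/
theorem support_subset [NonUnitalNonAssocSemiring R] {d : H → R} {c : ι → H → R} {b : G → R}
    (hb : GradedRecurrence φ s d c b) (hd : ∀ h, h ≠ 0 → IsLeftRegular (d h))
    (ht : G →+ ℤ) (hs : ∀ i, 0 < ht (s i)) (hneg : ∀ g, ht g < 0 → b g = 0)
    {T : Set G} (hT : ∀ i, ∀ g ∈ T, g + s i ∈ T) (hzero : ∀ g, φ g = 0 → b g ≠ 0 → g ∈ T) :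
    support b ⊆ T := by
  intro g hg
  have ht_nonneg {g : G} (hg : b g ≠ 0) : 0 ≤ ht g := not_lt.1 (mt (hneg g) hg)
  induction hn : (ht g).toNat using Nat.strong_induction_on generalizing g with
  | _ n ih =>
    by_cases h0 : φ g = 0
    · exact hzero g h0 hg
    have hsum : ∑ i, c i (φ g) * b (g - s i) ≠ 0 := by
      rwa [← hb g h0, Ne, (hd _ h0).mul_left_eq_zero_iff]
    obtain ⟨i, -, hi⟩ := Finset.exists_ne_zero_of_sum_ne_zero hsum
    have hpred : b (g - s i) ≠ 0 := right_ne_zero_of_mul hi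
    have hlt : (ht (g - s i)).toNat < n := by
      have := ht_nonneg hpred
      have := hs i
      rw [map_sub] at *
      lia
    simpa using hT i _ (ih _ hlt hpred rfl)

theorem eq_of_forall_nonpos_eq [NonUnitalNonAssocRing R] {s : ι → ℤ} {d : ℤ → R}
    {c : ι → ℤ → R} {a a' : ℤ → R}
    (ha : GradedRecurrence (AddMonoidHom.id ℤ) s d c a)
    (ha' : GradedRecurrence (AddMonoidHom.id ℤ) s d c a')
    (hd : ∀ n, n ≠ 0 → IsLeftRegular (d n)) (hs : ∀ i, 0 < s i) (h : ∀ n ≤ 0, a n = a' n) :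
    a = a' := by
  have hsupp : support (a - a') ⊆ ∅ :=
    (ha.sub ha').support_subset hd (AddMonoidHom.id ℤ) hs (fun n hn => sub_eq_zero.2 (h n hn.le))
      (by simp) fun n hn hne => hne (sub_eq_zero.2 (h n hn.le))
  exact sub_eq_zero.1 (support_eq_empty_iff.1 (Set.subset_empty_iff.1 hsupp))

end GradedRecurrence

namespace Buhring

/-- The degree `3 m - 2 n₁ - n₂` of the index `(m, n₁, n₂)`. -/
def degree : ℤ × ℤ × ℤ →+ ℤ where
  toFun g := 3 * g.1 - 2 * g.2.1 - g.2.2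
  map_zero' := by simp
  map_add' g g' := by simp only [Prod.fst_add, Prod.snd_add]; ring

@[simp]
theorem degree_apply (g : ℤ × ℤ × ℤ) : degree g = 3 * g.1 - 2 * g.2.1 - g.2.2 := rfl

/-- The shifts in the recurrence for `b`, listed in order of their degrees `1, …, 9`. -/
def shift : Fin 9 → ℤ × ℤ × ℤ :=
  ![(1, 1, 0), (1, 0, 1), (1, 0, 0), (2, 1, 0), (2, 0, 1), (2, 0, 0), (3, 1, 0), (3, 0, 1),
    (3, 0, 0)]

/-- The cone `n₁, n₂ ≥ 0`, `n₁ + n₂ ≤ m`, which contains the support of `b`. -/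
def cone : AddSubmonoid (ℤ × ℤ × ℤ) where
  carrier := {g | 0 ≤ g.2.1 ∧ 0 ≤ g.2.2 ∧ g.2.1 + g.2.2 ≤ g.1}
  zero_mem' := by simp
  add_mem' := by
    intro g g' hg hg'
    simp only [Set.mem_ofPred_eq, Prod.fst_add, Prod.snd_add] at *
    lia

theorem mem_cone {g : ℤ × ℤ × ℤ} : g ∈ cone ↔ 0 ≤ g.2.1 ∧ 0 ≤ g.2.2 ∧ g.2.1 + g.2.2 ≤ g.1 :=
  Iff.rfl

theorem fst_shift_pos (i : Fin 9) : 0 < (shift i).1 := by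
  fin_cases i <;> decide

theorem shift_mem_cone (i : Fin 9) : shift i ∈ cone := by
  fin_cases i <;> simp [shift, mem_cone]

theorem nonneg_of_mem_cone {g : ℤ × ℤ × ℤ} (hg : g ∈ cone) : 0 ≤ g :=
  ⟨(add_nonneg hg.1 hg.2.1).trans hg.2.2, hg.1, hg.2.1⟩

theorem fst_le_degree_of_mem_cone {g : ℤ × ℤ × ℤ} (hg : g ∈ cone) : g.1 ≤ degree g := by
  rw [mem_cone] at hg
  rw [degree_apply]
  lia

theorem degree_nonneg_of_mem_cone {g : ℤ × ℤ × ℤ} (hg : g ∈ cone) : 0 ≤ degree g :=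
  (nonneg_of_mem_cone hg).1.trans (fst_le_degree_of_mem_cone hg)

theorem shift_nonneg (i : Fin 9) : 0 ≤ shift i :=
  nonneg_of_mem_cone (shift_mem_cone i)

theorem degree_shift_pos (i : Fin 9) : 0 < degree (shift i) :=
  (fst_shift_pos i).trans_le (fst_le_degree_of_mem_cone (shift_mem_cone i))

theorem finite_fiber_inter_cone (k : ℤ) : (degree ⁻¹' {k} ∩ cone).Finite := by
  refine (Set.finite_Icc (0 : ℤ × ℤ × ℤ) (k, k, k)).subset ?_
  rintro g ⟨rfl, hg⟩
  have hle := fst_le_degree_of_mem_cone hg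
  have h0 := nonneg_of_mem_cone hg
  obtain ⟨h1, h2, hsum⟩ := hg
  exact ⟨h0, hle, by lia, by lia⟩

theorem finite_setOf_two_mul_add (n k : ℕ) : {p : ℕ × ℕ | 2 * p.1 + p.2 + n = k}.Finite := by
  refine (Set.finite_Iic (k, k)).subset fun p hp => ?_
  simp only [Set.mem_ofPred_eq] at hp
  exact ⟨by lia, by lia⟩

variable {R : Type*}

theorem sum_mul_comp_sub_shift [NonUnitalNonAssocSemiring R] (c : Fin 9 → R)
    (b : ℤ × ℤ × ℤ → R) (m n1 n2 : ℤ) :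
    ∑ i, c i * b ((m, n1, n2) - shift i) =
      c 0 * b (m - 1, n1 - 1, n2) + c 1 * b (m - 1, n1, n2 - 1) + c 2 * b (m - 1, n1, n2)
      + c 3 * b (m - 2, n1 - 1, n2) + c 4 * b (m - 2, n1, n2 - 1) + c 5 * b (m - 2, n1, n2)
      + c 6 * b (m - 3, n1 - 1, n2) + c 7 * b (m - 3, n1, n2 - 1) + c 8 * b (m - 3, n1, n2) := by
  simp [Fin.sum_univ_castSucc, shift]

theorem sum_mul_comp_sub_degree_shift [NonUnitalNonAssocSemiring R] (c : Fin 9 → R) (a : ℤ → R)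
    (n : ℤ) :
    ∑ i, c i * a (n - degree (shift i)) =
      c 0 * a (n - 1) + c 1 * a (n - 2) + c 2 * a (n - 3) + c 3 * a (n - 4) + c 4 * a (n - 5)
      + c 5 * a (n - 6) + c 6 * a (n - 7) + c 7 * a (n - 8) + c 8 * a (n - 9) := by
  simp [Fin.sum_univ_castSucc, shift]

theorem support_subset_cone [NonUnitalNonAssocSemiring R] {d : ℤ → R} {c : Fin 9 → ℤ → R}
    {b : ℤ × ℤ × ℤ → R}
    (hb : GradedRecurrence degree shift d c b) (hd : ∀ n, n ≠ 0 → IsLeftRegular (d n))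
    (hneg : ∀ g, ¬ 0 ≤ g → b g = 0) (hzero : ∀ g, degree g = 0 → g ≠ 0 → b g = 0) :
    support b ⊆ cone :=
  hb.support_subset hd (AddMonoidHom.fst ℤ (ℤ × ℤ)) fst_shift_pos
    (fun _ hg => hneg _ fun h => hg.not_ge h.1)
    (fun i _ hg => add_mem hg (shift_mem_cone i))
    (fun g h0 hg => not_imp_comm.1 (hzero g h0) hg ▸ zero_mem cone)

theorem eq_fiberSum_degree [NonUnitalNonAssocRing R] {d : ℤ → R} {c : Fin 9 → ℤ → R}
    {b : ℤ × ℤ × ℤ → R} {a : ℤ → R} (hb : GradedRecurrence degree shift d c b)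
    (ha : GradedRecurrence (AddMonoidHom.id ℤ) (degree ∘ shift) d c a)
    (hd : ∀ n, n ≠ 0 → IsLeftRegular (d n)) (hsupp : support b ⊆ cone)
    (hzero : ∀ g, degree g = 0 → g ≠ 0 → b g = 0) (ha_neg : ∀ n < 0, a n = 0) (hab : a 0 = b 0) :
    a = fiberSum degree b := by
  have hfin (n : ℤ) : (degree ⁻¹' {n} ∩ support b).Finite :=
    (finite_fiber_inter_cone n).subset (Set.inter_subset_inter_right _ hsupp)
  refine ha.eq_of_forall_nonpos_eq (hb.fiberSum hfin) hd degree_shift_pos fun n hn => ?_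
  obtain rfl | hn := hn.eq_or_lt
  · rw [hab, fiberSum_zero_eq_apply_zero hzero]
  · rw [ha_neg n hn, fiberSum_eq_zero]
    rintro g rfl
    by_contra hg
    exact (degree_nonneg_of_mem_cone (hsupp hg)).not_gt hn

theorem fiberSum_degree_eq_sum_slices [AddCommMonoid R] {b : ℤ × ℤ × ℤ → R}
    (hb : support b ⊆ cone) (n : ℕ) :
    fiberSum degree b n =
      ∑ m ∈ Finset.range (n + 1),
        ∑ᶠ p ∈ {p : ℕ × ℕ | 2 * p.1 + p.2 + n = 3 * m}, b (m, p.1, p.2) := by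
  let index (m : ℕ) (p : ℕ × ℕ) : ℤ × ℤ × ℤ := (m, p.1, p.2)
  let slice (m : ℕ) : Set (ℤ × ℤ × ℤ) := index m '' {p | 2 * p.1 + p.2 + n = 3 * m}
  have index_injective (m : ℕ) : Injective (index m) := fun p q h => by
    simpa [index, Prod.ext_iff] using h
  have disjoint_slices : (Finset.range (n + 1) : Set ℕ).PairwiseDisjoint slice := by
    rintro m - m' - hne
    refine Set.disjoint_left.2 ?_
    rintro _ ⟨p, -, rfl⟩ ⟨q, -, h⟩
    exact hne (Nat.cast_injective (congrArg Prod.fst h).symm)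
  have fiber_eq : ∀ g ∈ support b,
      g ∈ degree ⁻¹' {(n : ℤ)} ↔ g ∈ ⋃ m ∈ (Finset.range (n + 1) : Set ℕ), slice m := by
    rintro ⟨m, n1, n2⟩ hg
    have hle := fst_le_degree_of_mem_cone (hb hg)
    obtain ⟨hm, h1, h2⟩ := nonneg_of_mem_cone (hb hg)
    lift m to ℕ using hm
    lift n1 to ℕ using h1
    lift n2 to ℕ using h2
    simp only [degree_apply] at hle
    simp only [slice, index, Set.mem_preimage, degree_apply, Set.mem_singleton_iff,
      Finset.coe_range, Set.mem_Iio, Order.lt_add_one_iff, Set.mem_iUnion, Set.mem_image,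
      Set.mem_ofPred_eq, Prod.mk.injEq, Nat.cast_inj, Prod.exists, ↓existsAndEq, and_true,
      exists_eq_right_right, exists_and_left, exists_prop]
    lia
  rw [fiberSum, finsum_mem_inter_support_eq' b _ _ fiber_eq,
    finsum_mem_biUnion disjoint_slices (Finset.finite_toSet _)
      fun m _ => (finite_setOf_two_mul_add n (3 * m)).image _, finsum_mem_coe_finset]
  exact Finset.sum_congr rfl fun m _ => finsum_mem_image (index_injective m).injOn

theorem sum_slices_three_mul [AddCommMonoid R] (f : ℕ → ℕ × ℕ → R) (N : ℕ) :
    ∑ m ∈ Finset.range (3 * N + 1), ∑ᶠ p ∈ {p : ℕ × ℕ | 2 * p.1 + p.2 + 3 * N = 3 * m}, f m p =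
      ∑ l ∈ Finset.range (2 * N + 1), ∑ᶠ p ∈ {p : ℕ × ℕ | 2 * p.1 + p.2 = 3 * l}, f (N + l) p := by
  rw [show 3 * N + 1 = N + (2 * N + 1) by ring, Finset.sum_range_add, Finset.sum_eq_zero, zero_add]
  · refine Finset.sum_congr rfl fun l _ => finsum_mem_congr ?_ fun _ _ => rfl
    ext p
    simp only [Set.mem_ofPred_eq]
    lia
  · intro m hm
    refine finsum_mem_eq_zero_of_forall_eq_zero fun p hp => ?_
    simp only [Finset.mem_range, Set.mem_ofPred_eq] at hm hp
    lia

end Buhring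

open Buhring in
theorem buhring_a_three_N_general {K : Type*} [Field K] [CharZero K]
    (kap s0 t10 t20 tau L B1 B2 D1 D2 D3 D4 D5 D6 : K) (hkap : kap ≠ 0) (hs0 : s0 ≠ 0)
    (b : ℤ → ℤ → ℤ → K)
    (hb_neg : ∀ m n1 n2 : ℤ, (m < 0 ∨ n1 < 0 ∨ n2 < 0) → b m n1 n2 = 0)
    (hb_one : b 0 0 0 = 1)
    (hb_zero : ∀ m n1 n2 : ℤ, 3 * m - 2 * n1 - n2 = 0 → (m, n1, n2) ≠ (0, 0, 0) →
      b m n1 n2 = 0)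
    (hb_rec : ∀ m n1 n2 : ℤ, 0 ≤ m → 0 ≤ n1 → 0 ≤ n2 → 3 * m - 2 * n1 - n2 ≠ 0 →
      6 * kap * s0 * ((3 * m - 2 * n1 - n2 : ℤ) : K) * b m n1 n2 =
        ((((3 * m - 2 * n1 - n2 : ℤ) : K) + tau - 3) ^ 2 - L ^ 2) * b (m - 1) n1 n2
        + (-4 * kap * t10 * (((3 * m - 2 * n1 - n2 : ℤ) : K) + tau - 2) + t20 ^ 2 - B2) *
            b (m - 1) (n1 - 1) n2
        + (-2 * kap * t20 * (((3 * m - 2 * n1 - n2 : ℤ) : K) + tau - 5 / 2) - B1) *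
            b (m - 1) n1 (n2 - 1)
        - D1 * b (m - 2) (n1 - 1) n2 - D2 * b (m - 2) n1 (n2 - 1) - D3 * b (m - 2) n1 n2
        - D4 * b (m - 3) (n1 - 1) n2 - D5 * b (m - 3) n1 (n2 - 1) - D6 * b (m - 3) n1 n2)
    (a : ℤ → K)
    (ha_neg : ∀ n : ℤ, n < 0 → a n = 0)
    (ha_one : a 0 = 1)
    (ha_rec : ∀ n : ℤ, 1 ≤ n →
      6 * kap * s0 * (n : K) * a n =
        (-4 * kap * t10 * ((n : K) + tau - 2) + t20 ^ 2 - B2) * a (n - 1)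
        + (-2 * kap * t20 * ((n : K) + tau - 5 / 2) - B1) * a (n - 2)
        + (((n : K) + tau - 3) ^ 2 - L ^ 2) * a (n - 3)
        - D1 * a (n - 4) - D2 * a (n - 5) - D3 * a (n - 6)
        - D4 * a (n - 7) - D5 * a (n - 8) - D6 * a (n - 9))
    (n : ℕ) :
    a n =
      ∑ m ∈ Finset.range (n + 1),
        ∑ᶠ p ∈ {p : ℕ × ℕ | 2 * p.1 + p.2 + n = 3 * m}, b m p.1 p.2 := by
  let β (g : ℤ × ℤ × ℤ) : K := b g.1 g.2.1 g.2.2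
  let d (k : ℤ) : K := 6 * kap * s0 * k
  let c (i : Fin 9) (k : ℤ) : K :=
    ![-4 * kap * t10 * (k + tau - 2) + t20 ^ 2 - B2, -2 * kap * t20 * (k + tau - 5 / 2) - B1,
      (k + tau - 3) ^ 2 - L ^ 2, -D1, -D2, -D3, -D4, -D5, -D6] i
  have hd (k : ℤ) (hk : k ≠ 0) : IsLeftRegular (d k) :=
    (IsRegular.of_ne_zero (by simp [d, hkap, hs0, hk])).left
  have hneg (g : ℤ × ℤ × ℤ) (hg : ¬ 0 ≤ g) : β g = 0 :=
    hb_neg _ _ _ (by simp only [Prod.le_def, Prod.fst_zero, Prod.snd_zero] at hg; lia)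
  have hzero (g : ℤ × ℤ × ℤ) (h0 : degree g = 0) (hg : g ≠ 0) : β g = 0 :=
    hb_zero _ _ _ h0 hg
  have hβ : GradedRecurrence degree shift d c β :=
    .of_nonneg shift_nonneg hneg fun g hg h0 => (hb_rec _ _ _ hg.1 hg.2.1 hg.2.2 h0).trans <| by
      rw [sum_mul_comp_sub_shift]
      simp only [c, β, Matrix.cons_val, degree_apply]
      ring
  have ha : GradedRecurrence (.id ℤ) (degree ∘ shift) d c a :=
    .of_nonneg (fun i => (degree_shift_pos i).le) (fun k hk => ha_neg k (not_le.1 hk))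
      fun k hk h0 => (ha_rec k (hk.lt_of_ne' h0)).trans <| by
        simp only [comp_apply, AddMonoidHom.id_apply, sum_mul_comp_sub_degree_shift, c,
          Matrix.cons_val]
        ring
  have hsupp := support_subset_cone hβ hd hneg hzero
  rw [eq_fiberSum_degree hβ ha hd hsupp hzero ha_neg (ha_one.trans hb_one.symm)]
  exact fiberSum_degree_eq_sum_slices hsupp n

theorem buhring_a_three_N
    (kap s0 t10 t20 tau L B1 B2 D1 D2 D3 D4 D5 D6 : ℝ)
    (hkap : kap = 1 ∨ kap = -1) (hs0 : s0 ≠ 0)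
    (b : ℤ → ℤ → ℤ → ℝ)
    (hb_neg : ∀ m n1 n2 : ℤ, (m < 0 ∨ n1 < 0 ∨ n2 < 0) → b m n1 n2 = 0)
    (hb_one : b 0 0 0 = 1)
    (hb_zero : ∀ m n1 n2 : ℤ, 3 * m - 2 * n1 - n2 = 0 → (m, n1, n2) ≠ (0, 0, 0) →
      b m n1 n2 = 0)
    (hb_rec : ∀ m n1 n2 : ℤ, 0 ≤ m → 0 ≤ n1 → 0 ≤ n2 → 3 * m - 2 * n1 - n2 ≠ 0 →
      6 * kap * s0 * ((3 * m - 2 * n1 - n2 : ℤ) : ℝ) * b m n1 n2 =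
        ((((3 * m - 2 * n1 - n2 : ℤ) : ℝ) + tau - 3) ^ 2 - L ^ 2) * b (m - 1) n1 n2
        + (-4 * kap * t10 * (((3 * m - 2 * n1 - n2 : ℤ) : ℝ) + tau - 2) + t20 ^ 2 - B2) *
            b (m - 1) (n1 - 1) n2
        + (-2 * kap * t20 * (((3 * m - 2 * n1 - n2 : ℤ) : ℝ) + tau - 5 / 2) - B1) *
            b (m - 1) n1 (n2 - 1)
        - D1 * b (m - 2) (n1 - 1) n2 - D2 * b (m - 2) n1 (n2 - 1) - D3 * b (m - 2) n1 n2
        - D4 * b (m - 3) (n1 - 1) n2 - D5 * b (m - 3) n1 (n2 - 1) - D6 * b (m - 3) n1 n2)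
    (a : ℤ → ℝ)
    (ha_neg : ∀ n : ℤ, n < 0 → a n = 0)
    (ha_one : a 0 = 1)
    (ha_rec : ∀ n : ℤ, 1 ≤ n →
      6 * kap * s0 * (n : ℝ) * a n =
        (-4 * kap * t10 * ((n : ℝ) + tau - 2) + t20 ^ 2 - B2) * a (n - 1)
        + (-2 * kap * t20 * ((n : ℝ) + tau - 5 / 2) - B1) * a (n - 2)
        + (((n : ℝ) + tau - 3) ^ 2 - L ^ 2) * a (n - 3)
        - D1 * a (n - 4) - D2 * a (n - 5) - D3 * a (n - 6)
        - D4 * a (n - 7) - D5 * a (n - 8) - D6 * a (n - 9)) :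
    ∀ N : ℕ,
      a ((3 * N : ℕ) : ℤ) =
        ∑ l ∈ Finset.range (2 * N + 1),
          ∑ᶠ p ∈ {p : ℕ × ℕ | 2 * p.1 + p.2 = 3 * l},
            b ((N + l : ℕ) : ℤ) (p.1 : ℤ) (p.2 : ℤ) :=
  fun N => (buhring_a_three_N_general kap s0 t10 t20 tau L B1 B2 D1 D2 D3 D4 D5 D6
    (by rcases hkap with rfl | rfl <;> norm_num) hs0 b hb_neg hb_one hb_zero hb_rec a ha_neg ha_one
    ha_rec (3 * N)).trans (Buhring.sum_slices_three_mul (fun m p => b m p.1 p.2) N)
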